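/- Let a, b, c be pairwise coprime positive integers with c² = a² + b² + ab, let k be a positive integer, and let x be an integer with x > c² − a − b. Then the ideal trapezoid with shorter parallel side x and lateral sides k·ab tiles into k·(2x + k·ab) congruent copies of the triangle with side lengths (a, b, c). -/

import Mathlib

noncomputable section

abbrev Plane := EuclideanSpace ℝ (Fin 2)

/-- The point (x, y) in the Euclidean plane. -/
def pt (x y : ℝ) : Plane := (WithLp.equiv 2 (Fin 2 → ℝ)).symm ![x, y]

/-- `Δ` is a triangle with side lengths `(p, q, r)`: the convex hull of points `P, Q, R`
with `dist Q R = p`, `dist P R = q`, `dist P Q = r`. -/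
def IsTriangle (p q r : ℝ) (Δ : Set Plane) : Prop :=
  ∃ P Q R : Plane, dist Q R = p ∧ dist P R = q ∧ dist P Q = r ∧
    Δ = convexHull ℝ {P, Q, R}

/-- `S` tiles into `N` congruent copies of the `(p, q, r)` triangle: there are isometries
`f 1, …, f N` of the plane and a triangle `Δ` with side lengths `(p, q, r)` such that
`S` is the union of the `f i '' Δ` and their interiors are pairwise disjoint. -/
def TilesInto (S : Set Plane) (N : ℕ) (p q r : ℝ) : Prop :=
  ∃ (f : Fin N → Plane ≃ᵢ Plane) (Δ : Set Plane),
    IsTriangle p q r Δ ∧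
    S = ⋃ i, f i '' Δ ∧
    ∀ i j : Fin N, i ≠ j → interior (f i '' Δ) ∩ interior (f j '' Δ) = ∅

/-- The ideal trapezoid with shorter parallel side `x` and lateral sides `ℓ`
(longer parallel side `x + ℓ`, base angles `π/3`). -/
def IdealTrapezoid (x ℓ : ℝ) : Set Plane :=
  convexHull ℝ {pt 0 0, pt (x + ℓ) 0, pt (x + ℓ/2) (ℓ * Real.sqrt 3 / 2),
    pt (ℓ/2) (ℓ * Real.sqrt 3 / 2)}

/-!
Measure the plane in oblique coordinates along two unit vectors at angle `π/3`, where the squared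
length is the form `X² + XY + Y²`; the relation `c² = a² + b² + ab` says that `a` and `b` enclose
the angle `2π/3` in the triangle `(a, b, c)`. The trapezoid with shorter side `a² + b²` and lateral
sides `ab` is cut by the segments from its top point `(a², ab)` to its two lower corners into three
triangles similar to `(a, b, c)` with ratios `a`, `c` and `b`, which are tiled by `a²`, `c²` and
`b²` copies. Two copies form a parallelogram with sides `a` and `b`, so strips of these lengthen a
trapezoid of height `ab` by any `p a + q b`; the hypothesis on `x` is exactly Sylvester's bound
for `x - a² - b²` to be of that form. Stacking `k` trapezoids of height `ab`, each row longer than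
the one above it by `ab`, gives lateral sides `k ab`.
-/

/-! ### Congruent families and isometries -/

section Congruence

variable {M V : Type*} [AddCommGroup M] [Module ℝ M] [NormedAddCommGroup V] [InnerProductSpace ℝ V]

lemma inner_sub_sub_eq_of_congruent {ι : Type*} {v w : ι → V} (h : Congruent v w) (i j k : ι) :
    inner ℝ (v i - v k) (v j - v k) = inner ℝ (w i - w k) (w j - w k) := by
  simp only [real_inner_eq_norm_mul_self_add_norm_mul_self_sub_norm_sub_mul_self_div_two,
    sub_sub_sub_cancel_right, ← dist_eq_norm, h.dist_eq]

variable [FiniteDimensional ℝ V]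

lemma exists_linearIsometry_apply_eq {A B : M →ₗ[ℝ] V} (h : ∀ m, ‖A m‖ = ‖B m‖) :
    ∃ e : V →ₗᵢ[ℝ] V, ∀ m, e (A m) = B m := by
  obtain ⟨g, hg⟩ := A.rangeRestrict.exists_rightInverse_of_surjective A.range_rangeRestrict
  have hAg (y : A.range) : A (g y) = y := congrArg Subtype.val (LinearMap.congr_fun hg y)
  let L : A.range →ₗᵢ[ℝ] V := ⟨B ∘ₗ g, fun y => by simp [← h, hAg]⟩
  refine ⟨L.extend, fun m => (L.extend_apply (A.rangeRestrict m)).trans ?_⟩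
  rw [← sub_eq_zero, ← norm_eq_zero]
  calc ‖B (g (A.rangeRestrict m)) - B m‖ = ‖A (g (A.rangeRestrict m) - m)‖ := by
        rw [h, map_sub]
    _ = ‖A m - A m‖ := by rw [map_sub, hAg, LinearMap.codRestrict_apply]
    _ = 0 := by rw [sub_self, norm_zero]

theorem exists_isometryEquiv_of_congruent {ι : Type*} {v w : ι → V} (h : Congruent v w) :
    ∃ f : V ≃ᵢ V, ∀ i, f (v i) = w i := by
  cases isEmpty_or_nonempty ι with
  | inl => exact ⟨.refl V, isEmptyElim⟩
  | inr hι =>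
    obtain ⟨k⟩ := hι
    let A := Finsupp.linearCombination ℝ fun i => v i - v k
    let B := Finsupp.linearCombination ℝ fun i => w i - w k
    have hAB (m) : ‖A m‖ = ‖B m‖ := by
      simp only [norm_eq_sqrt_real_inner, A, B, Finsupp.linearCombination_apply, Finsupp.sum_inner,
        Finsupp.inner_sum, inner_smul_left, inner_smul_right, inner_sub_sub_eq_of_congruent h _ _ k]
    obtain ⟨e, he⟩ := exists_linearIsometry_apply_eq hAB
    have hei (i) : e (v i - v k) = w i - w k := by simpa [A, B] using he (Finsupp.single i 1)
    refine ⟨(IsometryEquiv.subRight (v k)).trans <|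
      (e.toLinearIsometryEquiv rfl).toIsometryEquiv.trans (IsometryEquiv.addRight (w k)),
      fun i => ?_⟩
    simp [hei]

end Congruence

/-! ### Tilings by congruent triangles -/

section Tilings

variable {p q r : ℝ} {S S' Δ Δ' : Set Plane} {N N' : ℕ}

lemma image_convexHull_triple (e : Plane ≃ᵢ Plane) (P Q R : Plane) :
    e '' convexHull ℝ {P, Q, R} = convexHull ℝ {e P, e Q, e R} := by
  simpa [Set.image_insert_eq] using
    e.toRealAffineIsometryEquiv.toAffineEquiv.toAffineMap.image_convexHull {P, Q, R}

lemma IsTriangle.swap (hΔ : IsTriangle p q r Δ) : IsTriangle q p r Δ := by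
  obtain ⟨P, Q, R, hp, hq, hr, rfl⟩ := hΔ
  exact ⟨Q, P, R, hq, hp, dist_comm P Q ▸ hr, by rw [Set.insert_comm]⟩

theorem IsTriangle.exists_image_eq (hΔ : IsTriangle p q r Δ) (hΔ' : IsTriangle p q r Δ') :
    ∃ e : Plane ≃ᵢ Plane, e '' Δ = Δ' := by
  obtain ⟨P, Q, R, hp, hq, hr, rfl⟩ := hΔ
  obtain ⟨P', Q', R', hp', hq', hr', rfl⟩ := hΔ'
  have hcongr : Congruent ![P, Q, R] ![P', Q', R'] := by
    refine congruent_iff_dist_eq.2 fun i j => ?_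
    fin_cases i <;> fin_cases j <;> simp [dist_comm, hp, hq, hr, hp', hq', hr']
  obtain ⟨e, he⟩ := exists_isometryEquiv_of_congruent hcongr
  obtain ⟨rfl, rfl, rfl⟩ : e P = P' ∧ e Q = Q' ∧ e R = R' := ⟨he 0, he 1, he 2⟩
  exact ⟨e, image_convexHull_triple e P Q R⟩

lemma IsTriangle.tilesInto (hΔ : IsTriangle p q r Δ) : TilesInto Δ 1 p q r :=
  ⟨fun _ => .refl Plane, Δ, hΔ, by rw [Set.iUnion_const]; exact (Set.image_id Δ).symm,
    fun i j hij => (hij (Subsingleton.elim i j)).elim⟩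

lemma TilesInto.swap (h : TilesInto S N p q r) : TilesInto S N q p r := by
  obtain ⟨f, Δ, hΔ, hS⟩ := h
  exact ⟨f, Δ, hΔ.swap, hS⟩

lemma TilesInto.image (h : TilesInto S N p q r) (e : Plane ≃ᵢ Plane) :
    TilesInto (e '' S) N p q r := by
  obtain ⟨f, Δ, hΔ, rfl, hdisj⟩ := h
  have himage (i) : (f i).trans e '' Δ = e '' (f i '' Δ) := Set.image_comp e (f i) Δ
  have hinterior (T : Set Plane) : interior (e '' T) = e '' interior T :=
    (e.toHomeomorph.image_interior T).symm
  refine ⟨fun i => (f i).trans e, Δ, hΔ, by simp only [himage, Set.image_iUnion], fun i j hij => ?_⟩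
  simp only [himage, hinterior, ← Set.image_inter e.injective, hdisj i j hij, Set.image_empty]

theorem TilesInto.union (h : TilesInto S N p q r) (h' : TilesInto S' N' p q r)
    (hdisj : Disjoint (interior S) (interior S')) : TilesInto (S ∪ S') (N + N') p q r := by
  obtain ⟨f, Δ, hΔ, rfl, hf⟩ := h
  obtain ⟨f', Δ', hΔ', rfl, hf'⟩ := h'
  obtain ⟨e, rfl⟩ := hΔ.exists_image_eq hΔ'
  have himage (j) : f' j '' (e '' Δ) = e.trans (f' j) '' Δ := (Set.image_comp (f' j) e Δ).symm
  have hcross (i j) : interior (f i '' Δ) ∩ interior (e.trans (f' j) '' Δ) = ∅ :=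
    (hdisj.mono (interior_mono (Set.subset_iUnion _ i))
      (interior_mono (himage j ▸ Set.subset_iUnion (fun j => f' j '' (e '' Δ)) j))).inter_eq
  simp only [himage] at hf' ⊢
  refine ⟨Fin.append f fun j => e.trans (f' j), Δ, hΔ, ?_, ?_⟩
  · simp [← finSumFinEquiv.surjective.iUnion_comp, Set.iUnion_sum]
  · intro i j
    induction i using Fin.addCases <;> induction j using Fin.addCases <;> intro hij
    all_goals simp only [Fin.append_left, Fin.append_right]
    · exact hf _ _ (by grind)
    · exact hcross _ _
    · exact Set.inter_comm _ _ ▸ hcross _ _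
    · exact hf' _ _ (by grind)

end Tilings

/-! ### Tilings in an affine frame -/

section Interior

variable {E F : Type*} [NormedAddCommGroup E] [NormedSpace ℝ E]
  [NormedAddCommGroup F] [NormedSpace ℝ F]

lemma surjective_of_nonempty_interior_image {φ : E →ᵃ[ℝ] F} {A : Set E}
    (h : (interior (φ '' A)).Nonempty) : Function.Surjective φ := by
  have hrange : interior (φ '' A) ⊆ (⊤ : AffineSubspace ℝ E).map φ :=
    interior_subset.trans (Set.image_mono (Set.subset_univ A))
  have htop : (⊤ : AffineSubspace ℝ E).map φ = ⊤ :=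
    top_unique <| (isOpen_interior.affineSpan_eq_top h).ge.trans (affineSpan_le.2 hrange)
  intro y
  obtain ⟨x, -, hx⟩ : y ∈ (⊤ : AffineSubspace ℝ E).map φ := htop ▸ AffineSubspace.mem_top ℝ F y
  exact ⟨x, hx⟩

variable [FiniteDimensional ℝ E]

lemma disjoint_interior_image [FiniteDimensional ℝ F]
    (hEF : Module.finrank ℝ E = Module.finrank ℝ F) (φ : E →ᵃ[ℝ] F) {A B : Set E}
    (hAB : Disjoint (interior A) (interior B)) :
    Disjoint (interior (φ '' A)) (interior (φ '' B)) := by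
  -- A common interior point makes `φ` surjective, hence bijective by dimension.
  refine Set.disjoint_left.2 fun y hyA hyB => ?_
  have hsurj : Function.Surjective φ := surjective_of_nonempty_interior_image ⟨y, hyA⟩
  have hinj : Function.Injective φ := φ.linear_injective_iff.1 <|
    (LinearMap.injective_iff_surjective_of_finrank_eq_finrank hEF).2 <|
      φ.linear_surjective_iff.2 hsurj
  have hpreimage (T : Set E) : φ ⁻¹' interior (φ '' T) = interior T := by
    rw [(φ.isOpenMap φ.continuous_of_finiteDimensional hsurj).preimage_interior_eq_interior_preimage
      φ.continuous_of_finiteDimensional, hinj.preimage_image]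
  obtain ⟨x, rfl⟩ := hsurj y
  exact Set.disjoint_left.1 hAB (hpreimage A ▸ hyA : x ∈ interior A) (hpreimage B ▸ hyB)

lemma disjoint_interior_halfSpaces {f : E →ₗ[ℝ] ℝ} (hf : f ≠ 0) (r : ℝ) :
    Disjoint (interior {z | f z ≤ r}) (interior {z | r ≤ f z}) := by
  have hpreimage (s : Set ℝ) : interior (f ⁻¹' s) = f ⁻¹' interior s :=
    ((f.isOpenMap_of_finiteDimensional (f.surjective hf)).preimage_interior_eq_interior_preimage
      f.continuous_of_finiteDimensional s).symm
  change Disjoint (interior (f ⁻¹' Set.Iic r)) (interior (f ⁻¹' Set.Ici r))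
  rw [hpreimage, hpreimage, interior_Iic, interior_Ici]
  exact Disjoint.preimage f (Set.Iio_disjoint_Ioi_same)

end Interior

/-- The triangle with vertices `0`, `(n, 0)`, `(0, n)` in coordinates, cut out by its edges. -/
def cornerTriangle (n : ℝ) : Set (ℝ × ℝ) := {z | 0 ≤ z.1 ∧ 0 ≤ z.2 ∧ z.1 + z.2 ≤ n}

section Frame

variable {p q r : ℝ} {N N' : ℕ} {φ : ℝ × ℝ →ᵃ[ℝ] Plane} {S A B : Set (ℝ × ℝ)}

lemma TilesInto.of_halfplanes {α β : ℝ} (hαβ : α ≠ 0 ∨ β ≠ 0) (d : ℝ)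
    (hle : TilesInto (φ '' {z ∈ S | α * z.1 + β * z.2 ≤ d}) N p q r)
    (hge : TilesInto (φ '' {z ∈ S | d ≤ α * z.1 + β * z.2}) N' p q r) :
    TilesInto (φ '' S) (N + N') p q r := by
  let f : ℝ × ℝ →ₗ[ℝ] ℝ := α • LinearMap.fst ℝ ℝ ℝ + β • LinearMap.snd ℝ ℝ ℝ
  have hf : f ≠ 0 := fun h => hαβ.elim
    (fun hα => hα (by simpa [f] using LinearMap.congr_fun h (1, 0)))
    (fun hβ => hβ (by simpa [f] using LinearMap.congr_fun h (0, 1)))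
  have hunion : S = {z ∈ S | f z ≤ d} ∪ {z ∈ S | d ≤ f z} := by
    ext z
    simp [← and_or_left, le_total]
  rw [hunion, Set.image_union]
  exact hle.union hge <| disjoint_interior_image (by simp) φ <|
    (disjoint_interior_halfSpaces hf d).mono (interior_mono fun _ h => h.2)
      (interior_mono fun _ h => h.2)

lemma TilesInto.image_translate (h : TilesInto (φ '' A) N p q r) (x y : ℝ) :
    TilesInto (φ '' {z | (z.1 - x, z.2 - y) ∈ A}) N p q r := by
  have hφ (z) : φ.linear (x, y) + φ z = φ (z + (x, y)) := by
    rw [add_comm z]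
    exact (φ.map_vadd z (x, y)).symm
  have hA : {z | (z.1 - x, z.2 - y) ∈ A} = (· + (x, y)) '' A := by
    rw [Set.image_add_right]
    simp only [Set.preimage, ← sub_eq_add_neg]
    rfl
  convert h.image (IsometryEquiv.addLeft (φ.linear (x, y))) using 1
  rw [hA, Set.image_image, Set.image_image]
  simp only [IsometryEquiv.addLeft_apply, hφ]

lemma TilesInto.image_reflect (h : TilesInto (φ '' A) N p q r) (x y : ℝ) :
    TilesInto (φ '' {z | (x - z.1, y - z.2) ∈ A}) N p q r := by
  have hφ (z) : φ (x, y) + φ 0 - φ z = φ ((x, y) - z) := by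
    have hdecomp (z) : φ z = φ.linear z + φ 0 := congrFun φ.decomp z
    rw [hdecomp (x, y), hdecomp z, hdecomp ((x, y) - z), map_sub]
    abel
  have hA : {z | (x - z.1, y - z.2) ∈ A} = ((x, y) - ·) '' A :=
    (congrFun (Set.image_eq_preimage_of_inverse (sub_sub_cancel (x, y))
      (sub_sub_cancel (x, y))) A).symm
  convert h.image (IsometryEquiv.subLeft (φ (x, y) + φ 0)) using 1
  rw [hA, Set.image_image, Set.image_image]
  simp only [IsometryEquiv.subLeft_apply, hφ]

end Frame

section Grid

variable {p q r : ℝ} {φ : ℝ × ℝ →ᵃ[ℝ] Plane}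

lemma TilesInto.image_unitSquare (h : TilesInto (φ '' cornerTriangle 1) 1 p q r) :
    TilesInto (φ '' Set.Icc 0 1 ×ˢ Set.Icc 0 1) 2 p q r := by
  refine .of_halfplanes (α := 1) (β := 1) (by simp) 1 (N := 1) (N' := 1) ?_ ?_
  · convert h using 2
    ext ⟨s, t⟩
    simp only [cornerTriangle, Set.mem_ofPred_eq, Set.mem_prod, Set.mem_Icc]
    grind
  · convert h.image_reflect 1 1 using 2
    ext ⟨s, t⟩
    simp only [cornerTriangle, Set.mem_ofPred_eq, Set.mem_prod, Set.mem_Icc]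
    grind

lemma TilesInto.image_column (h : TilesInto (φ '' cornerTriangle 1) 1 p q r) {n : ℕ} (hn : 1 ≤ n) :
    TilesInto (φ '' Set.Icc 0 1 ×ˢ Set.Icc 0 (n : ℝ)) (2 * n) p q r := by
  induction n, hn using Nat.le_induction with
  | base => simpa using h.image_unitSquare
  | succ n _ ih =>
    refine .of_halfplanes (α := 0) (β := 1) (by simp) n (N := 2 * n) (N' := 2) ?_ ?_
    · convert ih using 2
      ext ⟨s, t⟩
      simp only [Set.mem_ofPred_eq, Set.mem_prod, Set.mem_Icc]
      grind
    · convert h.image_unitSquare.image_translate 0 n using 2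
      ext ⟨s, t⟩
      simp only [Set.mem_ofPred_eq, Set.mem_prod, Set.mem_Icc]
      grind

lemma TilesInto.image_cornerTriangle (h : TilesInto (φ '' cornerTriangle 1) 1 p q r) {n : ℕ}
    (hn : 1 ≤ n) : TilesInto (φ '' cornerTriangle n) (n ^ 2) p q r := by
  induction n, hn using Nat.le_induction with
  | base => simpa using h
  | succ n hn ih =>
    rw [show (n + 1) ^ 2 = 2 * n + 1 + n ^ 2 by ring]
    refine .of_halfplanes (α := 1) (β := 0) (by simp) 1 ?_ ?_
    · refine .of_halfplanes (α := 0) (β := 1) (by simp) n ?_ ?_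
      · convert h.image_column hn using 2
        ext ⟨s, t⟩
        simp only [cornerTriangle, Set.mem_ofPred_eq, Set.mem_prod, Set.mem_Icc]
        grind
      · convert h.image_translate 0 n using 2
        ext ⟨s, t⟩
        simp only [cornerTriangle, Set.mem_ofPred_eq]
        grind
    · convert ih.image_translate 1 0 using 2
      ext ⟨s, t⟩
      simp only [cornerTriangle, Set.mem_ofPred_eq]
      grind

end Grid

/-! ### Triangles in coordinates -/

/-- Twice the signed area of the triangle `A B C`, positive when its vertices run
counterclockwise; its sign tells on which side of the line `A B` the point `C` lies. -/
def doubleSignedArea (A B C : ℝ × ℝ) : ℝ :=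
  (B.1 - A.1) * (C.2 - A.2) - (B.2 - A.2) * (C.1 - A.1)

section Coordinates

variable {A B C z : ℝ × ℝ}

lemma convex_setOf_doubleSignedArea_nonneg (A B : ℝ × ℝ) :
    Convex ℝ {z | 0 ≤ doubleSignedArea A B z} := by
  intro z hz w hw s t hs ht hst
  have hcomb : doubleSignedArea A B (s • z + t • w) =
      s * doubleSignedArea A B z + t * doubleSignedArea A B w := by
    obtain rfl : t = 1 - s := by linarith
    simp only [doubleSignedArea, Prod.fst_add, Prod.snd_add, Prod.smul_fst, Prod.smul_snd,
      smul_eq_mul]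
    ring
  exact hcomb.ge.trans' (add_nonneg (mul_nonneg hs hz) (mul_nonneg ht hw))

theorem mem_convexHull_triple_iff (hABC : 0 < doubleSignedArea A B C) :
    z ∈ convexHull ℝ {A, B, C} ↔ 0 ≤ doubleSignedArea A B z ∧
      0 ≤ doubleSignedArea B C z ∧ 0 ≤ doubleSignedArea C A z := by
  constructor
  · suffices h : convexHull ℝ {A, B, C} ⊆ {z | 0 ≤ doubleSignedArea A B z} ∩
        ({z | 0 ≤ doubleSignedArea B C z} ∩ {z | 0 ≤ doubleSignedArea C A z}) from fun hz => h hz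
    refine convexHull_min ?_ <| (convex_setOf_doubleSignedArea_nonneg A B).inter <|
      (convex_setOf_doubleSignedArea_nonneg B C).inter (convex_setOf_doubleSignedArea_nonneg C A)
    simp only [doubleSignedArea] at hABC
    simp only [Set.insert_subset_iff, Set.singleton_subset_iff, Set.mem_inter_iff,
      Set.mem_ofPred_eq, doubleSignedArea]
    grind
  · rintro ⟨hAB, hBC, hCA⟩
    have hsum : doubleSignedArea B C z + doubleSignedArea C A z + doubleSignedArea A B z =
        doubleSignedArea A B C := by
      simp only [doubleSignedArea]
      ring
    set D := doubleSignedArea A B C with hD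
    let w : Fin 3 → ℝ :=
      ![doubleSignedArea B C z / D, doubleSignedArea C A z / D, doubleSignedArea A B z / D]
    have hz : ∑ i, w i • ![A, B, C] i = z := by
      rw [Fin.sum_univ_three]
      ext <;> simp only [w, Matrix.cons_val, Prod.fst_add, Prod.snd_add, Prod.smul_fst,
        Prod.smul_snd, smul_eq_mul] <;> field_simp <;> simp only [hD, doubleSignedArea] <;> ring
    rw [← hz]
    refine (convex_convexHull ℝ {A, B, C}).sum_mem ?_ ?_ ?_
    · simp [Fin.forall_fin_succ, w, div_nonneg, hABC.le, hAB, hBC, hCA]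
    · rw [Fin.sum_univ_three]
      simp [w, ← add_div, hsum, hABC.ne']
    · intro i _
      fin_cases i <;> exact subset_convexHull ℝ _ (by simp)

lemma cornerTriangle_eq_convexHull {n : ℝ} (hn : 0 < n) :
    cornerTriangle n = convexHull ℝ {(0, 0), (n, 0), (0, n)} := by
  ext ⟨s, t⟩
  have hbottom : doubleSignedArea (0, 0) (n, 0) (s, t) = n * t := by simp [doubleSignedArea]
  have hhyp : doubleSignedArea (n, 0) (0, n) (s, t) = n * (n - (s + t)) := by
    simp only [doubleSignedArea]
    ring
  have hleft : doubleSignedArea (0, n) (0, 0) (s, t) = n * s := by simp [doubleSignedArea]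
  rw [mem_convexHull_triple_iff (by simp [doubleSignedArea, hn]), hbottom, hhyp, hleft]
  simp only [cornerTriangle, Set.mem_ofPred_eq, mul_nonneg_iff_of_pos_left hn, sub_nonneg]
  tauto

lemma image_cornerTriangle {V : Type*} [AddCommGroup V] [Module ℝ V] (φ : ℝ × ℝ →ᵃ[ℝ] V) {n : ℝ}
    (hn : 0 < n) : φ '' cornerTriangle n = convexHull ℝ {φ (0, 0), φ (n, 0), φ (0, n)} := by
  rw [cornerTriangle_eq_convexHull hn, φ.image_convexHull]
  simp only [Set.image_insert_eq, Set.image_singleton]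

end Coordinates

section Frame

variable {V : Type*} [AddCommGroup V] [Module ℝ V]

/-- The affine coordinate system `(s, t) ↦ P + s u + t v`; the vectors `u` and `v` need not be
linearly independent. -/
def affineFrame (P u v : V) : ℝ × ℝ →ᵃ[ℝ] V :=
  ((LinearMap.fst ℝ ℝ ℝ).smulRight u + (LinearMap.snd ℝ ℝ ℝ).smulRight v).toAffineMap +
    AffineMap.const ℝ (ℝ × ℝ) P

@[simp]
lemma affineFrame_apply (P u v : V) (z : ℝ × ℝ) :
    affineFrame P u v z = z.1 • u + z.2 • v + P := by
  simp [affineFrame]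

end Frame

theorem IsTriangle.tilesInto_sq {p q r : ℝ} {Δ : Set Plane} {n : ℕ} (hn : 1 ≤ n)
    (hΔ : IsTriangle (n * p) (n * q) (n * r) Δ) : TilesInto Δ (n ^ 2) p q r := by
  obtain ⟨P, Q, R, hp, hq, hr, rfl⟩ := hΔ
  rw [dist_comm, dist_eq_norm] at hq hr
  have hn0 : (0 : ℝ) < n := by exact_mod_cast hn
  let φ := affineFrame P ((n : ℝ)⁻¹ • (Q - P)) ((n : ℝ)⁻¹ • (R - P))
  have hunit : IsTriangle p q r (φ '' cornerTriangle 1) := by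
    refine ⟨_, _, _, ?_, ?_, ?_, image_cornerTriangle φ one_pos⟩
    · simp [φ, dist_smul₀, hp, hn0.ne']
    · simp [φ, norm_smul, hq, hn0.ne']
    · simp [φ, norm_smul, hr, hn0.ne']
  have hhull : convexHull ℝ {P, Q, R} = φ '' cornerTriangle n := by
    rw [image_cornerTriangle φ hn0]
    simp [φ, hn0.ne']
  exact hhull ▸ hunit.tilesInto.image_cornerTriangle hn

/-! ### Trapezoids in oblique coordinates -/

/-- The point of the plane with coordinates `(X, Y)` with respect to two unit vectors that form an
angle `π/3`, the first one along the horizontal axis. -/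
def oblique : ℝ × ℝ →ᵃ[ℝ] Plane := affineFrame 0 (pt 1 0) (pt (1 / 2) (√3 / 2))

/-- The trapezoid with shorter parallel side `x` and lateral sides `l` in oblique coordinates,
cut out by its four edges. -/
def obliqueTrapezoid (x l : ℝ) : Set (ℝ × ℝ) :=
  {z | 0 ≤ z.1 ∧ 0 ≤ z.2 ∧ z.2 ≤ l ∧ z.1 + z.2 ≤ x + l}

section Oblique

variable {p q r : ℝ} {A B C : ℝ × ℝ}

lemma oblique_apply (X Y : ℝ) : oblique (X, Y) = pt (X + Y / 2) (Y * √3 / 2) := by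
  ext i
  fin_cases i <;> simp [oblique, pt] <;> ring

lemma dist_oblique_sq (z w : ℝ × ℝ) : dist (oblique z) (oblique w) ^ 2 =
    (z.1 - w.1) ^ 2 + (z.1 - w.1) * (z.2 - w.2) + (z.2 - w.2) ^ 2 := by
  obtain ⟨X, Y⟩ := z
  obtain ⟨X', Y'⟩ := w
  have h3 : √3 ^ 2 = 3 := Real.sq_sqrt (by norm_num)
  have hcoord : dist (oblique (X, Y)) (oblique (X', Y')) ^ 2 =
      (X + Y / 2 - (X' + Y' / 2)) ^ 2 + (Y * √3 / 2 - Y' * √3 / 2) ^ 2 := by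
    simp [EuclideanSpace.dist_sq_eq, Real.dist_eq, oblique_apply, pt]
  rw [hcoord]
  linear_combination (Y - Y') ^ 2 / 4 * h3

lemma dist_oblique_eq_iff (hr : 0 ≤ r) {z w : ℝ × ℝ} : dist (oblique z) (oblique w) = r ↔
    (z.1 - w.1) ^ 2 + (z.1 - w.1) * (z.2 - w.2) + (z.2 - w.2) ^ 2 = r ^ 2 := by
  rw [← dist_oblique_sq, sq_eq_sq₀ dist_nonneg hr]

lemma isTriangle_oblique_image (hp : 0 ≤ p) (hq : 0 ≤ q) (hr : 0 ≤ r)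
    (hBC : (B.1 - C.1) ^ 2 + (B.1 - C.1) * (B.2 - C.2) + (B.2 - C.2) ^ 2 = p ^ 2)
    (hAC : (A.1 - C.1) ^ 2 + (A.1 - C.1) * (A.2 - C.2) + (A.2 - C.2) ^ 2 = q ^ 2)
    (hAB : (A.1 - B.1) ^ 2 + (A.1 - B.1) * (A.2 - B.2) + (A.2 - B.2) ^ 2 = r ^ 2) :
    IsTriangle p q r (oblique '' convexHull ℝ {A, B, C}) :=
  ⟨oblique A, oblique B, oblique C, (dist_oblique_eq_iff hp).2 hBC, (dist_oblique_eq_iff hq).2 hAC,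
    (dist_oblique_eq_iff hr).2 hAB,
    by simp only [oblique.image_convexHull, Set.image_insert_eq, Set.image_singleton]⟩

lemma convex_obliqueTrapezoid (x l : ℝ) : Convex ℝ (obliqueTrapezoid x l) := by
  rintro z ⟨hz₁, hz₂, hz₃, hz₄⟩ w ⟨hw₁, hw₂, hw₃, hw₄⟩ s t hs ht hst
  refine ⟨?_, ?_, ?_, ?_⟩ <;>
    simp only [Prod.fst_add, Prod.snd_add, Prod.smul_fst, Prod.smul_snd, smul_eq_mul]
  · positivity
  · positivity
  · nlinarith
  · nlinarith

lemma obliqueTrapezoid_eq_convexHull {x l : ℝ} (hx : 0 < x) (hl : 0 < l) :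
    obliqueTrapezoid x l = convexHull ℝ {(0, 0), (x + l, 0), (x, l), (0, l)} := by
  refine Set.Subset.antisymm ?_ (convexHull_min ?_ (convex_obliqueTrapezoid x l))
  · rintro ⟨X, Y⟩ ⟨hX, hY, hYl, hXY⟩
    dsimp only at hX hY hYl hXY
    rcases le_total (x * Y) (l * X) with hdiag | hdiag
    · refine convexHull_mono (s := {(0, 0), (x + l, 0), (x, l)}) (by grind) ?_
      rw [mem_convexHull_triple_iff] <;> simp only [doubleSignedArea]
      · exact ⟨by nlinarith, by nlinarith, by nlinarith⟩
      · nlinarith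
    · refine convexHull_mono (s := {(0, 0), (x, l), (0, l)}) (by grind) ?_
      rw [mem_convexHull_triple_iff] <;> simp only [doubleSignedArea]
      · exact ⟨by nlinarith, by nlinarith, by nlinarith⟩
      · nlinarith
  · simp only [Set.insert_subset_iff, Set.singleton_subset_iff, obliqueTrapezoid,
      Set.mem_ofPred_eq]
    grind

theorem oblique_image_obliqueTrapezoid {x l : ℝ} (hx : 0 < x) (hl : 0 < l) :
    oblique '' obliqueTrapezoid x l = IdealTrapezoid x l := by
  rw [obliqueTrapezoid_eq_convexHull hx hl, oblique.image_convexHull, IdealTrapezoid]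
  simp [Set.image_insert_eq, oblique_apply]

end Oblique

/-! ### Similar triangles filling a trapezoid -/

/-- The left one of the three similar triangles that fill the trapezoid
`obliqueTrapezoid (a ^ 2 + b ^ 2) (a * b)`, with vertices `(0, 0)`, `(a ^ 2, a * b)` and
`(0, a * b)`. -/
def leftTriangle (a b : ℝ) : Set (ℝ × ℝ) := {z | 0 ≤ z.1 ∧ b * z.1 ≤ a * z.2 ∧ z.2 ≤ a * b}

/-- The middle one of the three similar triangles that fill the trapezoid
`obliqueTrapezoid (a ^ 2 + b ^ 2) (a * b)`, on its longer parallel side and with apex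
`(a ^ 2, a * b)`. -/
def middleTriangle (a b : ℝ) : Set (ℝ × ℝ) :=
  {z | 0 ≤ z.2 ∧ a * z.2 ≤ b * z.1 ∧ a * z.1 + (a + b) * z.2 ≤ a * (a ^ 2 + b ^ 2 + a * b)}

/-- The right one of the three similar triangles that fill the trapezoid
`obliqueTrapezoid (a ^ 2 + b ^ 2) (a * b)`, with vertices `(a ^ 2, a * b)`,
`(a ^ 2 + b ^ 2 + a * b, 0)` and `(a ^ 2 + b ^ 2, a * b)`. -/
def rightTriangle (a b : ℝ) : Set (ℝ × ℝ) :=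
  {z | a * (a ^ 2 + b ^ 2 + a * b) ≤ a * z.1 + (a + b) * z.2 ∧
    z.1 + z.2 ≤ a ^ 2 + b ^ 2 + a * b ∧ z.2 ≤ a * b}

section Pieces

variable {a b : ℝ}

lemma leftTriangle_eq_convexHull (ha : 0 < a) (hb : 0 < b) :
    leftTriangle a b = convexHull ℝ {(0, 0), (a ^ 2, a * b), (0, a * b)} := by
  ext ⟨X, Y⟩
  have hABC : doubleSignedArea (0, 0) (a ^ 2, a * b) (0, a * b) = a ^ 2 * (a * b) := by
    simp only [doubleSignedArea]; ring
  have hAB : doubleSignedArea (0, 0) (a ^ 2, a * b) (X, Y) = a * (a * Y - b * X) := by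
    simp only [doubleSignedArea]; ring
  have hBC : doubleSignedArea (a ^ 2, a * b) (0, a * b) (X, Y) = a ^ 2 * (a * b - Y) := by
    simp only [doubleSignedArea]; ring
  have hCA : doubleSignedArea (0, a * b) (0, 0) (X, Y) = a * b * X := by
    simp only [doubleSignedArea]; ring
  rw [mem_convexHull_triple_iff (hABC ▸ by positivity), hAB, hBC, hCA,
    mul_nonneg_iff_of_pos_left (by positivity), mul_nonneg_iff_of_pos_left (by positivity),
    mul_nonneg_iff_of_pos_left (by positivity)]
  simp only [leftTriangle, Set.mem_ofPred_eq, sub_nonneg]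
  tauto

lemma middleTriangle_eq_convexHull (ha : 0 < a) (hb : 0 < b) : middleTriangle a b =
    convexHull ℝ {(0, 0), (a ^ 2 + b ^ 2 + a * b, 0), (a ^ 2, a * b)} := by
  ext ⟨X, Y⟩
  have hABC : doubleSignedArea (0, 0) (a ^ 2 + b ^ 2 + a * b, 0) (a ^ 2, a * b) =
      (a ^ 2 + b ^ 2 + a * b) * (a * b) := by
    simp only [doubleSignedArea]; ring
  have hAB : doubleSignedArea (0, 0) (a ^ 2 + b ^ 2 + a * b, 0) (X, Y) =
      (a ^ 2 + b ^ 2 + a * b) * Y := by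
    simp only [doubleSignedArea]; ring
  have hBC : doubleSignedArea (a ^ 2 + b ^ 2 + a * b, 0) (a ^ 2, a * b) (X, Y) =
      b * (a * (a ^ 2 + b ^ 2 + a * b) - (a * X + (a + b) * Y)) := by
    simp only [doubleSignedArea]; ring
  have hCA : doubleSignedArea (a ^ 2, a * b) (0, 0) (X, Y) = a * (b * X - a * Y) := by
    simp only [doubleSignedArea]; ring
  rw [mem_convexHull_triple_iff (hABC ▸ by positivity), hAB, hBC, hCA,
    mul_nonneg_iff_of_pos_left (by positivity), mul_nonneg_iff_of_pos_left (by positivity),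
    mul_nonneg_iff_of_pos_left (by positivity)]
  simp only [middleTriangle, Set.mem_ofPred_eq, sub_nonneg]
  tauto

lemma rightTriangle_eq_convexHull (ha : 0 < a) (hb : 0 < b) : rightTriangle a b =
    convexHull ℝ {(a ^ 2, a * b), (a ^ 2 + b ^ 2 + a * b, 0), (a ^ 2 + b ^ 2, a * b)} := by
  ext ⟨X, Y⟩
  have hABC : doubleSignedArea (a ^ 2, a * b) (a ^ 2 + b ^ 2 + a * b, 0)
      (a ^ 2 + b ^ 2, a * b) = b ^ 2 * (a * b) := by
    simp only [doubleSignedArea]; ring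
  have hAB : doubleSignedArea (a ^ 2, a * b) (a ^ 2 + b ^ 2 + a * b, 0) (X, Y) =
      b * (a * X + (a + b) * Y - a * (a ^ 2 + b ^ 2 + a * b)) := by
    simp only [doubleSignedArea]; ring
  have hBC : doubleSignedArea (a ^ 2 + b ^ 2 + a * b, 0) (a ^ 2 + b ^ 2, a * b) (X, Y) =
      a * b * (a ^ 2 + b ^ 2 + a * b - (X + Y)) := by
    simp only [doubleSignedArea]; ring
  have hCA : doubleSignedArea (a ^ 2 + b ^ 2, a * b) (a ^ 2, a * b) (X, Y) =
      b ^ 2 * (a * b - Y) := by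
    simp only [doubleSignedArea]; ring
  rw [mem_convexHull_triple_iff (hABC ▸ by positivity), hAB, hBC, hCA,
    mul_nonneg_iff_of_pos_left (by positivity), mul_nonneg_iff_of_pos_left (by positivity),
    mul_nonneg_iff_of_pos_left (by positivity)]
  simp only [rightTriangle, Set.mem_ofPred_eq, sub_nonneg]

lemma obliqueTrapezoid_sep_eq_leftTriangle (ha : 0 < a) (hb : 0 < b) :
    {z ∈ obliqueTrapezoid (a ^ 2 + b ^ 2) (a * b) | b * z.1 + -a * z.2 ≤ 0} =
      leftTriangle a b := by
  ext ⟨X, Y⟩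
  simp only [obliqueTrapezoid, leftTriangle, Set.mem_ofPred_eq]
  constructor
  · grind
  · rintro ⟨hX, hXY, hY⟩
    have hY₀ : 0 ≤ Y := nonneg_of_mul_nonneg_right (hXY.trans' (by positivity)) ha
    have hX₁ : X ≤ a ^ 2 := le_of_mul_le_mul_left (by linear_combination hXY + a * hY) hb
    have hsum : X + Y ≤ a ^ 2 + b ^ 2 + a * b := by linear_combination hX₁ + hY + sq_nonneg b
    grind

lemma obliqueTrapezoid_sep_eq_middleTriangle (ha : 0 < a) (hb : 0 < b) :
    {z ∈ {z ∈ obliqueTrapezoid (a ^ 2 + b ^ 2) (a * b) | 0 ≤ b * z.1 + -a * z.2} |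
      a * z.1 + (a + b) * z.2 ≤ a * (a ^ 2 + b ^ 2 + a * b)} = middleTriangle a b := by
  ext ⟨X, Y⟩
  simp only [obliqueTrapezoid, middleTriangle, Set.mem_ofPred_eq]
  constructor
  · grind
  · rintro ⟨hY₀, hXY, hle⟩
    have hX : 0 ≤ X := nonneg_of_mul_nonneg_right (hXY.trans' (by positivity)) hb
    have hY : Y ≤ a * b := by
      refine le_of_mul_le_mul_left ?_ (by positivity : 0 < a ^ 2 + b ^ 2 + a * b)
      linear_combination a * hXY + b * hle
    have hsum : X + Y ≤ a ^ 2 + b ^ 2 + a * b :=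
      le_of_mul_le_mul_left (by linear_combination hle + b * hY₀) ha
    grind

lemma obliqueTrapezoid_sep_eq_rightTriangle (ha : 0 < a) (hb : 0 < b) :
    {z ∈ {z ∈ obliqueTrapezoid (a ^ 2 + b ^ 2) (a * b) | 0 ≤ b * z.1 + -a * z.2} |
      a * (a ^ 2 + b ^ 2 + a * b) ≤ a * z.1 + (a + b) * z.2} = rightTriangle a b := by
  ext ⟨X, Y⟩
  simp only [obliqueTrapezoid, rightTriangle, Set.mem_ofPred_eq]
  constructor
  · grind
  · rintro ⟨hle, hsum, hY⟩
    have hY₀ : 0 ≤ Y := by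
      refine nonneg_of_mul_nonneg_right (a := b) ?_ hb
      linear_combination hle + a * hsum
    have hX : a ^ 2 ≤ X :=
      le_of_mul_le_mul_left (by linear_combination hle + (a + b) * hY) ha
    have hXY : a * Y ≤ b * X := by linear_combination a * hY + b * hX
    have hX₀ : 0 ≤ X := hX.trans' (sq_nonneg a)
    grind

end Pieces

section Core

variable {a b c : ℕ}

lemma tilesInto_leftTriangle (ha : 0 < a) (hb : 0 < b) (h : (c : ℝ) ^ 2 = a ^ 2 + b ^ 2 + a * b) :
    TilesInto (oblique '' leftTriangle a b) (a ^ 2) a b c := by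
  rw [leftTriangle_eq_convexHull (by positivity) (by positivity)]
  refine (isTriangle_oblique_image ?_ ?_ ?_ ?_ ?_ ?_).tilesInto_sq ha
  · positivity
  · positivity
  · positivity
  · ring
  · ring
  · linear_combination -a ^ 2 * h

lemma tilesInto_middleTriangle (ha : 0 < a) (hb : 0 < b) (hc : 0 < c)
    (h : (c : ℝ) ^ 2 = a ^ 2 + b ^ 2 + a * b) :
    TilesInto (oblique '' middleTriangle a b) (c ^ 2) a b c := by
  rw [middleTriangle_eq_convexHull (by positivity) (by positivity), ← h]
  refine ((isTriangle_oblique_image ?_ ?_ ?_ ?_ ?_ ?_).tilesInto_sq hc).swap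
  · positivity
  · positivity
  · positivity
  · linear_combination (c ^ 2 - a ^ 2 : ℝ) * h
  · linear_combination -a ^ 2 * h
  · ring

lemma tilesInto_rightTriangle (ha : 0 < a) (hb : 0 < b) (h : (c : ℝ) ^ 2 = a ^ 2 + b ^ 2 + a * b) :
    TilesInto (oblique '' rightTriangle a b) (b ^ 2) a b c := by
  rw [rightTriangle_eq_convexHull (by positivity) (by positivity)]
  refine (isTriangle_oblique_image ?_ ?_ ?_ ?_ ?_ ?_).tilesInto_sq hb
  · positivity
  · positivity
  · positivity
  · ring
  · ring
  · linear_combination -b ^ 2 * h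

lemma tilesInto_obliqueTrapezoid_sq_add_sq (ha : 0 < a) (hb : 0 < b) (hc : 0 < c)
    (h : (c : ℝ) ^ 2 = a ^ 2 + b ^ 2 + a * b) :
    TilesInto (oblique '' obliqueTrapezoid (a ^ 2 + b ^ 2) (a * b)) (a ^ 2 + (c ^ 2 + b ^ 2))
      a b c := by
  have ha₀ : (0 : ℝ) < a := by exact_mod_cast ha
  have hb₀ : (0 : ℝ) < b := by exact_mod_cast hb
  refine .of_halfplanes (α := b) (β := -a) (.inl hb₀.ne') 0 ?_ <|
    .of_halfplanes (α := a) (β := a + b) (.inl ha₀.ne') (a * (a ^ 2 + b ^ 2 + a * b)) ?_ ?_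
  · rw [obliqueTrapezoid_sep_eq_leftTriangle ha₀ hb₀]
    exact tilesInto_leftTriangle ha hb h
  · rw [obliqueTrapezoid_sep_eq_middleTriangle ha₀ hb₀]
    exact tilesInto_middleTriangle ha hb hc h
  · rw [obliqueTrapezoid_sep_eq_rightTriangle ha₀ hb₀]
    exact tilesInto_rightTriangle ha hb h

end Core

/-! ### Lengthening and stacking trapezoids -/

section Extension

variable {a b c n N : ℕ} {x : ℝ}

lemma tilesInto_oblique_strip (ha : 0 < a) (hb : 0 < b)
    (h : (c : ℝ) ^ 2 = a ^ 2 + b ^ 2 + a * b) (hn : 1 ≤ n) :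
    TilesInto (oblique '' Set.Icc 0 (a : ℝ) ×ˢ Set.Icc 0 (n * b : ℝ)) (2 * n) a b c := by
  -- The corner `(0, n * b)` and its frame are chosen so that the cells are cut along diagonals
  -- facing the angle `2π/3`.
  let ψ : ℝ × ℝ →ᵃ[ℝ] ℝ × ℝ := affineFrame (0, n * b) (a, 0) (0, -b)
  have hψ (s t : ℝ) : ψ (s, t) = (s * a, (n - t) * b) := by
    ext
    · simp [ψ]
    · simp only [ψ, affineFrame_apply, Prod.snd_add, Prod.smul_snd, smul_eq_mul]
      ring
  have htriangle : IsTriangle a b c (oblique '' (ψ '' cornerTriangle 1)) := by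
    have hcorner : ψ '' cornerTriangle 1 =
        convexHull ℝ {ψ (0, 1), ψ (1, 0), ψ (0, 0)} := by
      rw [image_cornerTriangle ψ one_pos, Set.pair_comm, Set.insert_comm, Set.pair_comm]
    rw [hcorner, hψ, hψ, hψ]
    refine isTriangle_oblique_image ?_ ?_ ?_ ?_ ?_ ?_
    · positivity
    · positivity
    · positivity
    · ring
    · ring
    · linear_combination -h
  have hstrip : Set.Icc 0 (a : ℝ) ×ˢ Set.Icc 0 (n * b : ℝ) =
      ψ '' Set.Icc 0 1 ×ˢ Set.Icc 0 (n : ℝ) := by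
    have ha₀ : (0 : ℝ) < a := by exact_mod_cast ha
    have hb₀ : (0 : ℝ) < b := by exact_mod_cast hb
    refine Set.Subset.antisymm ?_ ?_
    · rintro ⟨X, Y⟩ ⟨⟨hX₀, hX⟩, hY₀, hY⟩
      refine ⟨(X / a, n - Y / b), ⟨⟨by positivity, (div_le_one ha₀).2 hX⟩,
        sub_nonneg.2 ((div_le_iff₀ hb₀).2 hY), sub_le_self _ (by positivity)⟩, ?_⟩
      rw [hψ, sub_sub_cancel, div_mul_cancel₀ X ha₀.ne', div_mul_cancel₀ Y hb₀.ne']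
    · rintro _ ⟨⟨s, t⟩, ⟨⟨hs₀, hs⟩, ht₀, ht⟩, rfl⟩
      rw [hψ]
      refine ⟨⟨by positivity, mul_le_of_le_one_left ha₀.le hs⟩,
        mul_nonneg (sub_nonneg.2 ht) hb₀.le, ?_⟩
      exact mul_le_mul_of_nonneg_right (sub_le_self _ ht₀) hb₀.le
  have hcolumn : TilesInto (oblique.comp ψ '' cornerTriangle 1) 1 a b c := by
    simpa only [AffineMap.coe_comp, Set.image_comp] using htriangle.tilesInto
  simpa only [hstrip, AffineMap.coe_comp, Set.image_comp] using hcolumn.image_column hn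

lemma tilesInto_obliqueTrapezoid_add (ha : 0 < a) (hb : 0 < b)
    (h : (c : ℝ) ^ 2 = a ^ 2 + b ^ 2 + a * b) (hn : 1 ≤ n) (hx : 0 ≤ x)
    (hT : TilesInto (oblique '' obliqueTrapezoid x (n * b)) N a b c) :
    TilesInto (oblique '' obliqueTrapezoid (x + a) (n * b)) (2 * n + N) a b c := by
  refine .of_halfplanes (α := 1) (β := 0) (by simp) a ?_ ?_
  · convert tilesInto_oblique_strip ha hb h hn using 2
    ext ⟨X, Y⟩
    simp only [obliqueTrapezoid, Set.mem_ofPred_eq, Set.mem_prod, Set.mem_Icc]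
    grind
  · convert hT.image_translate a 0 using 2
    ext ⟨X, Y⟩
    simp only [obliqueTrapezoid, Set.mem_ofPred_eq]
    grind

lemma tilesInto_obliqueTrapezoid_add_mul (ha : 0 < a) (hb : 0 < b)
    (h : (c : ℝ) ^ 2 = a ^ 2 + b ^ 2 + a * b) (hn : 1 ≤ n) (hx : 0 ≤ x)
    (hT : TilesInto (oblique '' obliqueTrapezoid x (n * b)) N a b c) (p : ℕ) :
    TilesInto (oblique '' obliqueTrapezoid (x + p * a) (n * b)) (2 * n * p + N) a b c := by
  induction p with
  | zero => simpa using hT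
  | succ p ih =>
    convert tilesInto_obliqueTrapezoid_add ha hb h hn (by positivity) ih using 1
    · push_cast
      ring_nf
    · ring

lemma tilesInto_obliqueTrapezoid_row (ha : 0 < a) (hb : 0 < b) (hc : 0 < c)
    (h : (c : ℝ) ^ 2 = a ^ 2 + b ^ 2 + a * b) (p q : ℕ) :
    TilesInto (oblique '' obliqueTrapezoid (a ^ 2 + b ^ 2 + p * a + q * b) (a * b))
      (2 * (a ^ 2 + b ^ 2 + p * a + q * b) + a * b) a b c := by
  have hp : TilesInto (oblique '' obliqueTrapezoid (a ^ 2 + b ^ 2 + p * a) (b * a))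
      (2 * a * p + (a ^ 2 + (c ^ 2 + b ^ 2))) b a c := by
    rw [mul_comm (b : ℝ)]
    exact (tilesInto_obliqueTrapezoid_add_mul ha hb h ha (by positivity)
      (tilesInto_obliqueTrapezoid_sq_add_sq ha hb hc h) p).swap
  have h' : (c : ℝ) ^ 2 = b ^ 2 + a ^ 2 + b * a := by linear_combination h
  convert (tilesInto_obliqueTrapezoid_add_mul hb ha h' hb (by positivity) hp q).swap using 1
  · rw [mul_comm (b : ℝ)]
  · have hcℕ : c ^ 2 = a ^ 2 + b ^ 2 + a * b := by exact_mod_cast h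
    rw [hcℕ]
    ring

lemma TilesInto.obliqueTrapezoid_stack {p q r l l' : ℝ} {N' : ℕ} (hl : 0 ≤ l) (hl' : 0 ≤ l')
    (h : TilesInto (oblique '' obliqueTrapezoid (x + l') l) N p q r)
    (h' : TilesInto (oblique '' obliqueTrapezoid x l') N' p q r) :
    TilesInto (oblique '' obliqueTrapezoid x (l + l')) (N + N') p q r := by
  refine .of_halfplanes (α := 0) (β := 1) (by simp) l ?_ ?_
  · convert h using 2
    ext ⟨X, Y⟩
    simp only [obliqueTrapezoid, Set.mem_ofPred_eq]
    grind
  · convert h'.image_translate 0 l using 2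
    ext ⟨X, Y⟩
    simp only [obliqueTrapezoid, Set.mem_ofPred_eq]
    grind

theorem tilesInto_obliqueTrapezoid (ha : 0 < a) (hb : 0 < b) (hc : 0 < c)
    (h : (c : ℝ) ^ 2 = a ^ 2 + b ^ 2 + a * b) (p q : ℕ) {k : ℕ} (hk : 1 ≤ k) :
    TilesInto (oblique '' obliqueTrapezoid (a ^ 2 + b ^ 2 + p * a + q * b) (k * a * b))
      (k * (2 * (a ^ 2 + b ^ 2 + p * a + q * b) + k * a * b)) a b c := by
  induction k, hk using Nat.le_induction with
  | base => simpa using tilesInto_obliqueTrapezoid_row ha hb hc h p q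
  | succ k _ ih =>
    have hrow := tilesInto_obliqueTrapezoid_row ha hb hc h p (q + k * a)
    have hwidth : (a ^ 2 + b ^ 2 + p * a + (q + k * a : ℕ) * b : ℝ) =
        a ^ 2 + b ^ 2 + p * a + q * b + k * a * b := by
      push_cast
      ring
    rw [hwidth] at hrow
    convert hrow.obliqueTrapezoid_stack (by positivity) (by positivity) ih using 1
    · push_cast
      ring_nf
    · ring

end Extension

lemma exists_eq_sq_add_sq_add_mul_add_mul {a b c : ℕ} (ha : 0 < a) (hb : 0 < b)
    (hab : Nat.Coprime a b) (h : c ^ 2 = a ^ 2 + b ^ 2 + a * b) {x : ℤ}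
    (hx : (c : ℤ) ^ 2 - a - b < x) : ∃ p q : ℕ, x = a ^ 2 + b ^ 2 + p * a + q * b := by
  have hc2 : (c : ℤ) ^ 2 = a ^ 2 + b ^ 2 + a * b := by exact_mod_cast h
  have hpred : (((a - 1) * (b - 1) : ℕ) : ℤ) = (a - 1) * (b - 1) := by
    push_cast [Nat.cast_pred ha, Nat.cast_pred hb]
    rfl
  have hfrobenius : (((a - 1) * (b - 1) : ℕ) : ℤ) ≤ x - (a ^ 2 + b ^ 2) := by
    rw [hpred]
    linear_combination Int.add_one_le_iff.2 hx - hc2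
  obtain ⟨n, hn⟩ := Int.eq_ofNat_of_zero_le ((Int.natCast_nonneg _).trans hfrobenius)
  obtain ⟨p, q, hpq⟩ := Nat.exists_add_mul_eq_of_gcd_dvd_of_mul_pred_le a b n
    (by simp [hab.gcd_eq_one]) (by exact_mod_cast hn ▸ hfrobenius)
  have hn' : (p * a + q * b : ℤ) = n := by exact_mod_cast hpq
  exact ⟨p, q, by linear_combination hn - hn'⟩

theorem stmt2_general (a b c : ℕ) (ha : 0 < a) (hb : 0 < b) (h : c ^ 2 = a ^ 2 + b ^ 2 + a * b)
    (k : ℕ) (hk : 0 < k) (x : ℤ) (hx : ∃ p q : ℕ, x = a ^ 2 + b ^ 2 + p * a + q * b) :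
    TilesInto (IdealTrapezoid (x : ℝ) ((k : ℝ) * a * b))
      ((k * (2 * x + k * a * b)).toNat) a b c := by
  obtain ⟨p, q, rfl⟩ := hx
  have hc : 0 < c := pow_pos_iff (n := 2) two_ne_zero |>.1 (h ▸ by positivity)
  have hcount : (k * (2 * ((a : ℤ) ^ 2 + b ^ 2 + p * a + q * b) + k * a * b)).toNat =
      k * (2 * (a ^ 2 + b ^ 2 + p * a + q * b) + k * a * b) := by
    exact_mod_cast Int.toNat_natCast _
  push_cast
  rw [hcount, ← oblique_image_obliqueTrapezoid (by positivity) (by positivity)]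
  exact tilesInto_obliqueTrapezoid ha hb hc (by exact_mod_cast h) p q hk

theorem stmt2 (a b c : ℕ) (ha : 0 < a) (hb : 0 < b) (hc : 0 < c)
    (hab : Nat.Coprime a b) (hac : Nat.Coprime a c) (hbc : Nat.Coprime b c)
    (h : c ^ 2 = a ^ 2 + b ^ 2 + a * b)
    (k : ℕ) (hk : 0 < k) (x : ℤ) (hx : (c : ℤ) ^ 2 - a - b < x) :
    TilesInto (IdealTrapezoid (x : ℝ) ((k : ℝ) * a * b))
      ((k * (2 * x + k * a * b)).toNat) a b c := by
  exact stmt2_general a b c ha hb h k hk x (exists_eq_sq_add_sq_add_mul_add_mul ha hb hab h hx)
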